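/- arXiv:2407.12586 — 2 statements merged into one kernel-verified Lean document; each statement's English description precedes it below -/
import Mathlib

section
/- For every positive integer r and every rational number x with odd denominator, the quantity V((2^r + 1)·x) − V(x) lies in the half-open interval [−1/2, 1/2). Moreover, V((2^r + 1)·x) − V(x) = −1/2 if and only if there exists an integer i not divisible by 2^r + 1 such that x − i/(2^r + 1) is an integer. -/
/-- `IsV2 V` says that `V : ℚ → ℚ` is the Kubert `V`-function in characteristic 2:
for any rational `x` (with odd denominator), any `k ≥ 1` and any integer `a` with
`0 ≤ a < 2^k - 1` such that `x - a/(2^k - 1)` is an integer, `V x` equals the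
binary digit sum of `a` divided by `k`. -/
def IsV2 (V : ℚ → ℚ) : Prop :=
  ∀ (x : ℚ) (k a : ℕ), 0 < k → a < 2 ^ k - 1 →
    (∃ z : ℤ, x - (a : ℚ) / ((2 : ℚ) ^ k - 1) = (z : ℚ)) →
    V x = ((Nat.digits 2 a).sum : ℚ) / (k : ℚ)

/-!
If `(2 ^ k - 1) * x` is an integer, then `V x` is the mean of the fractional parts of
`x, 2 * x, …, 2 ^ (k - 1) * x`: multiplication by `2` rotates the `k`-digit binary period of `x`,
and Legendre's formula turns the sum of the rotated fractions into a digit sum. Hence `V` is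
invariant under doubling, and `V (x + y) - (V x + V y) / 2` is a mean of terms
`fract (u + v) - (fract u + fract v) / 2`. Each of them lies in `[-1/2, 1/2)` because
`fract u + fract v - fract (u + v)` is `0` or `1`, and it equals `-1/2` exactly when `u + v` is an
integer and `u` is not. The latter condition is the same for all `u = 2 ^ j * x`, the denominator
of `x` being odd. Taking `y = 2 ^ r * x` gives the theorem.
-/

open Finset
open scoped BigOperators

section Digits

variable {b k a : ℕ}

theorem sub_one_mul_sum_div_pow_add_sum_digits (hb : 1 < b) (ha : a < b ^ k) :
    (b - 1) * ∑ i ∈ range k, a / b ^ (i + 1) + (b.digits a).sum = a := by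
  rcases eq_or_ne a 0 with rfl | ha₀
  · simp
  have hlog : Nat.log b a + 1 ≤ k := Nat.log_lt_of_lt_pow ha₀ ha
  have truncate : ∑ i ∈ range (Nat.log b a + 1), a / b ^ (i + 1) =
      ∑ i ∈ range k, a / b ^ (i + 1) := by
    refine sum_subset (range_mono hlog) fun i _ hi ↦ Nat.div_eq_of_lt ?_
    rw [mem_range, not_lt] at hi
    exact Nat.lt_pow_of_log_lt hb (by omega)
  have legendre := Nat.sub_one_mul_sum_log_div_pow_eq_sub_sum_digits (p := b) a
  rw [Nat.succ_eq_add_one, truncate] at legendre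
  rw [legendre, Nat.sub_add_cancel (Nat.digit_sum_le b a)]

end Digits

section FractionalParts

section Ring

variable {R : Type*} [CommRing R] [LinearOrder R] [IsStrictOrderedRing R] [FloorRing R]

theorem fract_natCast_mul_fract (n : ℕ) (x : R) :
    Int.fract (n * Int.fract x) = Int.fract (n * x) := by
  refine Int.fract_eq_fract.2 ⟨-(n * ⌊x⌋), ?_⟩
  rw [Int.fract]
  push_cast
  ring

theorem fract_add_fract_eq_or (u v : R) :
    Int.fract u + Int.fract v = Int.fract (u + v) ∨
      Int.fract u + Int.fract v = Int.fract (u + v) + 1 := by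
  obtain ⟨z, hz⟩ := Int.fract_add u v
  have hz_gt : ((-2 : ℤ) : R) < z := by
    push_cast
    linarith [Int.fract_nonneg (u + v), Int.fract_lt_one u, Int.fract_lt_one v]
  have hz_lt : (z : R) < (1 : ℤ) := by
    push_cast
    linarith [Int.fract_lt_one (u + v), Int.fract_nonneg u, Int.fract_nonneg v]
  rw [Int.cast_lt] at hz_gt hz_lt
  obtain rfl | rfl : z = 0 ∨ z = -1 := by omega
  · left
    rw [Int.cast_zero] at hz
    linarith
  · right
    rw [Int.cast_neg, Int.cast_one] at hz
    linarith

end Ring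

variable {K : Type*} [Field K] [LinearOrder K] [IsStrictOrderedRing K] [FloorRing K]

section PeriodicExpansion

variable {b k a : ℕ} {y : K}

/- The hypothesis `b ^ k * y = a + y` says that the base-`b` expansion of `y` repeats the `k` digits
of `a`. -/
theorem floor_pow_mul_eq_div_pow (hb : b ≠ 0) (hy : y ∈ Set.Ico 0 1) (h : (b : K) ^ k * y = a + y)
    {j : ℕ} (hj : j ≤ k) : ⌊(b : K) ^ j * y⌋ = (a / b ^ (k - j) : ℕ) := by
  have hbK : (b : K) ≠ 0 := Nat.cast_ne_zero.2 hb
  have floor_top : ⌊(b : K) ^ k * y⌋ = a := by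
    rw [h, Int.floor_natCast_add, Int.floor_eq_zero_iff.2 hy, add_zero]
  have rescale : (b : K) ^ j * y = (b : K) ^ k * y / (b ^ (k - j) : ℕ) := by
    rw [Nat.cast_pow, eq_div_iff (pow_ne_zero _ hbK), mul_right_comm, ← pow_add,
      Nat.add_sub_cancel' hj]
  rw [rescale, Int.floor_div_natCast, floor_top, Int.natCast_div]

theorem sub_one_mul_sum_fract_pow_mul (hb : 1 < b) (hy : y ∈ Set.Ico 0 1)
    (h : (b : K) ^ k * y = a + y) :
    ((b : K) - 1) * ∑ j ∈ range k, Int.fract ((b : K) ^ j * y) = (b.digits a).sum := by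
  have ha : a < b ^ k := by
    have hbk : (0 : K) < (b : K) ^ k := by positivity
    have : (a : K) < (b : K) ^ k :=
      calc (a : K) ≤ a + y := le_add_of_nonneg_right hy.1
        _ = (b : K) ^ k * y := h.symm
        _ < (b : K) ^ k := mul_lt_of_lt_one_right hbk hy.2
    exact_mod_cast this
  have sum_floor : ∑ j ∈ range k, (⌊(b : K) ^ j * y⌋ : K) =
      ((∑ i ∈ range k, a / b ^ (i + 1) : ℕ) : K) := by
    rw [← sum_range_reflect, Nat.cast_sum]
    refine sum_congr rfl fun j hj ↦ ?_
    rw [mem_range] at hj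
    rw [floor_pow_mul_eq_div_pow (by omega) hy h (show k - 1 - j ≤ k by omega), Int.cast_natCast,
      show k - (k - 1 - j) = j + 1 by omega]
  have geometric : ((b : K) - 1) * ∑ j ∈ range k, (b : K) ^ j * y = a := by
    rw [← sum_mul, ← mul_assoc, mul_geom_sum, sub_mul, h]
    ring
  have legendre : ((b : K) - 1) * ((∑ i ∈ range k, a / b ^ (i + 1) : ℕ) : K) +
      (b.digits a).sum = a := by
    rw [← Nat.cast_pred (by omega)]
    exact_mod_cast sub_one_mul_sum_div_pow_add_sum_digits hb ha
  simp only [Int.fract, sum_sub_distrib, mul_sub, sum_floor, geometric]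
  exact sub_eq_of_eq_add' legendre.symm

end PeriodicExpansion

theorem fract_add_sub_half_mem_Ico (u v : K) :
    Int.fract (u + v) - (Int.fract u + Int.fract v) / 2 ∈ Set.Ico (-(1 / 2)) (1 / 2) := by
  have := Int.fract_nonneg (u + v)
  have := Int.fract_lt_one (u + v)
  rcases fract_add_fract_eq_or u v with h | h <;> rw [h] <;> constructor <;> linarith

theorem fract_add_sub_half_eq_neg_half_iff (u v : K) :
    Int.fract (u + v) - (Int.fract u + Int.fract v) / 2 = -(1 / 2) ↔
      Int.fract (u + v) = 0 ∧ Int.fract u ≠ 0 := by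
  have huv := Int.fract_nonneg (u + v)
  have hu := Int.fract_nonneg u
  have hv := Int.fract_nonneg v
  have hv' := Int.fract_lt_one v
  rcases fract_add_fract_eq_or u v with h | h
  · exact ⟨fun _ ↦ by linarith, fun ⟨_, hne⟩ ↦ absurd (by linarith) hne⟩
  · exact ⟨fun _ ↦ ⟨by linarith, fun _ ↦ by linarith⟩, fun ⟨_, _⟩ ↦ by linarith⟩

theorem fract_intCast_mul_eq_zero_and_fract_ne_zero_iff {n : ℤ} (hn : n ≠ 0) (x : K) :
    Int.fract (n * x) = 0 ∧ Int.fract x ≠ 0 ↔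
      ∃ i : ℤ, ¬ n ∣ i ∧ ∃ z : ℤ, x - (i : K) / n = z := by
  have hnK : (n : K) ≠ 0 := Int.cast_ne_zero.2 hn
  simp only [ne_eq, Int.fract_eq_zero_iff, Set.mem_range]
  constructor
  · rintro ⟨⟨i, hi⟩, hx⟩
    have hxi : x = i / n := by rw [hi, mul_div_cancel_left₀ _ hnK]
    refine ⟨i, ?_, 0, by rw [← hxi, sub_self, Int.cast_zero]⟩
    rintro ⟨c, rfl⟩
    exact hx ⟨c, by rw [hxi, Int.cast_mul, mul_div_cancel_left₀ _ hnK]⟩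
  · rintro ⟨i, hi, z, hz⟩
    have hnx : ((i + n * z : ℤ) : K) = n * x := by
      push_cast
      rw [← hz, mul_sub, mul_div_cancel₀ _ hnK, add_sub_cancel]
    refine ⟨⟨_, hnx⟩, ?_⟩
    rintro ⟨w, rfl⟩
    have : i + n * z = n * w := by exact_mod_cast hnx
    exact hi ⟨w - z, by linarith⟩

end FractionalParts

section Denominators

theorem exists_dvd_pow_sub_one {b d : ℕ} (h : b.Coprime d) (hd : d ≠ 0) :
    ∃ k, 0 < k ∧ d ∣ b ^ k - 1 := by
  refine ⟨d.totient, Nat.totient_pos.2 (Nat.pos_of_ne_zero hd), ?_⟩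
  rcases b.eq_zero_or_pos with rfl | hb
  · simp_all
  · exact (Nat.modEq_iff_dvd' (Nat.one_le_pow _ _ hb)).1 (Nat.ModEq.pow_totient h).symm

theorem exists_natCast_eq_mul_fract {x : ℚ} {n : ℕ} (h : x.den ∣ n) :
    ∃ a : ℕ, (n : ℚ) * Int.fract x = a := by
  obtain ⟨c, rfl⟩ := h
  obtain ⟨m, hm⟩ := Int.eq_ofNat_of_zero_le (Rat.num_nonneg.2 (Int.fract_nonneg x))
  have hfract : (x.den : ℚ) * Int.fract x = m := by
    rw [← Rat.den_intFract, Rat.den_mul_eq_num, hm, Int.cast_natCast]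
  exact ⟨m * c, by rw [Nat.cast_mul, mul_right_comm, hfract, Nat.cast_mul]⟩

theorem fract_natCast_mul_of_den_dvd_sub_one {x : ℚ} {n : ℕ} (hn : n ≠ 0) (h : x.den ∣ n - 1) :
    Int.fract (n * x) = Int.fract x := by
  obtain ⟨c, hc⟩ := h
  have hnQ : (n : ℚ) = 1 + x.den * c := by
    exact_mod_cast (show n = 1 + x.den * c by omega)
  refine Int.fract_eq_fract.2 ⟨x.num * c, ?_⟩
  rw [hnQ, Int.cast_mul, ← Rat.den_mul_eq_num]
  push_cast
  ring

theorem fract_natCast_mul_eq_zero_iff {x : ℚ} {n : ℕ} (h : n.Coprime x.den) :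
    Int.fract (n * x) = 0 ↔ Int.fract x = 0 := by
  simp only [Int.fract_eq_zero_iff, Set.mem_range]
  constructor
  · rintro ⟨m, hm⟩
    obtain ⟨u, v, huv⟩ := Nat.isCoprime_iff_coprime.2 h
    have bezout : (u : ℚ) * n + v * x.den = 1 := by exact_mod_cast huv
    refine ⟨u * m + v * x.num, ?_⟩
    calc ((u * m + v * x.num : ℤ) : ℚ) = (u * n + v * x.den) * x := by
          push_cast
          rw [hm, ← Rat.den_mul_eq_num]
          ring
      _ = x := by rw [bezout, one_mul]
  · rintro ⟨z, hz⟩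
    exact ⟨n * z, by rw [Int.cast_mul, Int.cast_natCast, hz]⟩

theorem den_natCast_mul_dvd (n : ℕ) (x : ℚ) : ((n : ℚ) * x).den ∣ x.den := by
  simpa using Rat.mul_den_dvd n x

theorem odd_den_two_pow_mul {x : ℚ} (hx : Odd x.den) (r : ℕ) : Odd ((2 : ℚ) ^ r * x).den :=
  hx.of_dvd_nat (by exact_mod_cast den_natCast_mul_dvd (2 ^ r) x)

end Denominators

namespace IsV2

variable {V : ℚ → ℚ} {x y : ℚ}

theorem eq_expect_fract (hV : IsV2 V) {k : ℕ} (hk : 0 < k) (hx : x.den ∣ 2 ^ k - 1) :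
    V x = 𝔼 j ∈ range k, Int.fract (2 ^ j * x) := by
  have hx01 : Int.fract x ∈ Set.Ico 0 1 := ⟨Int.fract_nonneg x, Int.fract_lt_one x⟩
  have hpos : (0 : ℚ) < 2 ^ k - 1 := sub_pos.2 (one_lt_pow₀ one_lt_two hk.ne')
  obtain ⟨a, ha⟩ := exists_natCast_eq_mul_fract hx
  rw [Nat.cast_pred (by positivity), Nat.cast_pow, Nat.cast_ofNat] at ha
  have ha_lt : a < 2 ^ k - 1 := by
    have : (a : ℚ) < 2 ^ k - 1 := ha ▸ mul_lt_of_lt_one_right hpos hx01.2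
    rw [Nat.lt_sub_iff_add_lt]
    exact_mod_cast lt_sub_iff_add_lt.1 this
  have hfract : x - (a : ℚ) / (2 ^ k - 1) = ⌊x⌋ := by
    rw [← ha, mul_div_cancel_left₀ _ hpos.ne', Int.self_sub_fract]
  have hdigits : ∑ j ∈ range k, Int.fract (2 ^ j * Int.fract x) = (Nat.digits 2 a).sum := by
    have := sub_one_mul_sum_fract_pow_mul (b := 2) (k := k) (a := a) one_lt_two hx01
      (by rw [← ha, Nat.cast_ofNat]; ring)
    rwa [Nat.cast_ofNat, show (2 : ℚ) - 1 = 1 by norm_num, one_mul] at this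
  have hterm (j : ℕ) : Int.fract (2 ^ j * Int.fract x) = Int.fract (2 ^ j * x) := by
    exact_mod_cast fract_natCast_mul_fract (2 ^ j) x
  rw [hV x k a hk ha_lt ⟨_, hfract⟩, ← hdigits, expect_eq_sum_div_card, card_range]
  simp only [hterm]

theorem map_two_mul (hV : IsV2 V) (hx : Odd x.den) : V (2 * x) = V x := by
  obtain ⟨k, hk, hxk⟩ := exists_dvd_pow_sub_one (Nat.coprime_two_left.2 hx) x.den_nz
  have h2xk : (2 * x).den ∣ 2 ^ k - 1 := (den_natCast_mul_dvd 2 x).trans hxk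
  have periodic : Int.fract (2 ^ k * x) = Int.fract (2 ^ 0 * x) := by
    have := fract_natCast_mul_of_den_dvd_sub_one (pow_ne_zero k two_ne_zero) hxk
    rw [pow_zero, one_mul]
    exact_mod_cast this
  have telescope := sum_range_sub (fun j ↦ Int.fract (2 ^ j * x)) k
  rw [periodic, sub_self, sum_sub_distrib, sub_eq_zero] at telescope
  simp only [hV.eq_expect_fract hk h2xk, hV.eq_expect_fract hk hxk, expect_eq_sum_div_card,
    ← telescope, pow_succ, mul_assoc]

theorem map_two_pow_mul (hV : IsV2 V) (hx : Odd x.den) (r : ℕ) : V (2 ^ r * x) = V x := by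
  induction r with
  | zero => rw [pow_zero, one_mul]
  | succ r ih => rw [pow_succ', mul_assoc, hV.map_two_mul (odd_den_two_pow_mul hx r), ih]

theorem exists_add_sub_half_eq_expect (hV : IsV2 V) (hx : Odd x.den) (hy : Odd y.den) :
    ∃ k, 0 < k ∧ V (x + y) - (V x + V y) / 2 =
      𝔼 j ∈ range k, (Int.fract (2 ^ j * x + 2 ^ j * y) -
        (Int.fract (2 ^ j * x) + Int.fract (2 ^ j * y)) / 2) := by
  obtain ⟨k, hk, hk_dvd⟩ := exists_dvd_pow_sub_one (Nat.coprime_two_left.2 (hx.mul hy))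
    (mul_ne_zero x.den_nz y.den_nz)
  refine ⟨k, hk, ?_⟩
  rw [hV.eq_expect_fract hk ((Rat.add_den_dvd x y).trans hk_dvd),
    hV.eq_expect_fract hk ((dvd_mul_right _ _).trans hk_dvd),
    hV.eq_expect_fract hk ((dvd_mul_left _ _).trans hk_dvd),
    ← expect_add_distrib, expect_div, ← expect_sub_distrib]
  simp only [mul_add]

theorem add_sub_half_mem_Ico (hV : IsV2 V) (hx : Odd x.den) (hy : Odd y.den) :
    V (x + y) - (V x + V y) / 2 ∈ Set.Ico (-(1 / 2)) (1 / 2) := by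
  obtain ⟨k, hk, hmean⟩ := hV.exists_add_sub_half_eq_expect hx hy
  have hne : (range k).Nonempty := nonempty_range_iff.2 hk.ne'
  rw [hmean]
  exact ⟨le_expect hne fun j _ ↦ (fract_add_sub_half_mem_Ico _ _).1,
    expect_lt (fun j _ ↦ (fract_add_sub_half_mem_Ico _ _).2.le)
      ⟨0, mem_range.2 hk, (fract_add_sub_half_mem_Ico _ _).2⟩⟩

theorem add_sub_half_eq_neg_half_iff (hV : IsV2 V) (hx : Odd x.den) (hy : Odd y.den) :
    V (x + y) - (V x + V y) / 2 = -(1 / 2) ↔ Int.fract (x + y) = 0 ∧ Int.fract x ≠ 0 := by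
  obtain ⟨k, hk, hmean⟩ := hV.exists_add_sub_half_eq_expect hx hy
  rw [hmean]
  constructor
  · intro h
    have hzero : Int.fract (2 ^ 0 * x + 2 ^ 0 * y) -
        (Int.fract (2 ^ 0 * x) + Int.fract (2 ^ 0 * y)) / 2 = -(1 / 2) := by
      by_contra hne
      have := lt_expect (fun j _ ↦ (fract_add_sub_half_mem_Ico (2 ^ j * x) (2 ^ j * y)).1)
        ⟨0, mem_range.2 hk, (fract_add_sub_half_mem_Ico _ _).1.lt_of_ne' hne⟩
      exact this.ne' h
    simpa only [pow_zero, one_mul] using (fract_add_sub_half_eq_neg_half_iff _ _).1 hzero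
  · rintro ⟨hxy, hx_ne⟩
    have hxy_int (j : ℕ) : Int.fract (2 ^ j * x + 2 ^ j * y) = 0 := by
      obtain ⟨z, hz⟩ := Int.fract_eq_zero_iff.1 hxy
      exact Int.fract_eq_zero_iff.2 ⟨2 ^ j * z, by push_cast; rw [hz, mul_add]⟩
    have hx_nonint (j : ℕ) : Int.fract (2 ^ j * x) ≠ 0 := by
      have := fract_natCast_mul_eq_zero_iff ((Nat.coprime_two_left.2 hx).pow_left j)
      push_cast at this
      rwa [ne_eq, this]
    rw [expect_congr rfl fun j _ ↦
      (fract_add_sub_half_eq_neg_half_iff _ _).2 ⟨hxy_int j, hx_nonint j⟩,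
      expect_const (nonempty_range_iff.2 hk.ne')]

end IsV2

/-- For every positive integer `r` and every rational `x` with odd denominator,
`V((2^r+1)x) - V(x) ∈ [-1/2, 1/2)`, with equality `= -1/2` iff `x ≡ i/(2^r+1) (mod ℤ)`
for some integer `i` not divisible by `2^r + 1`. -/
theorem stmt_4 (V : ℚ → ℚ) (hV : IsV2 V) (r : ℕ) (hr : 0 < r)
    (x : ℚ) (hx : Odd x.den) :
    V (((2 : ℚ) ^ r + 1) * x) - V x ∈ Set.Ico (-(1 / 2) : ℚ) (1 / 2) ∧
      (V (((2 : ℚ) ^ r + 1) * x) - V x = -(1 / 2) ↔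
        ∃ i : ℤ, ¬ ((2 ^ r + 1 : ℤ) ∣ i) ∧
          ∃ z : ℤ, x - (i : ℚ) / ((2 : ℚ) ^ r + 1) = (z : ℚ)) := by
  have hsum : ((2 : ℚ) ^ r + 1) * x = x + 2 ^ r * x := by ring
  have hodd : Odd ((2 : ℚ) ^ r * x).den := odd_den_two_pow_mul hx r
  have hdiff : V (((2 : ℚ) ^ r + 1) * x) - V x =
      V (x + 2 ^ r * x) - (V x + V (2 ^ r * x)) / 2 := by
    rw [hsum, hV.map_two_pow_mul hx, add_self_div_two]
  have hn : (2 ^ r + 1 : ℤ) ≠ 0 := by positivity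
  have hiff := fract_intCast_mul_eq_zero_and_fract_ne_zero_iff hn x
  push_cast at hiff
  rw [hdiff, hV.add_sub_half_eq_neg_half_iff hx hodd, ← hsum, hiff]
  exact ⟨hsum ▸ hV.add_sub_half_mem_Ico hx hodd, Iff.rfl⟩
end

section
/- Let t ≥ 1 and let a_1, …, a_t be positive integers such that the numbers 2^{a_1}+1, …, 2^{a_t}+1 are pairwise coprime. Let i_1, …, i_t be integers and set x = ∑_{j=1}^t i_j/(2^{a_j}+1). If for every j the number i_j is not divisible by 2^{a_j}+1, then V(2; a_1, …, a_t; x) + V(2; a_1, …, a_t; −x) = −1. If instead 2^{a_j}+1 divides i_j for at least one j, then V(2; a_1, …, a_t; x) + V(2; a_1, …, a_t; −x) = 0. -/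
/-- `Vmulti V r x = V(2; r₁, …, r_t; x) = ∑_{S ⊆ {1,…,t}} (-1)^{t - |S|} V((∏_{j ∈ S} (2^{r_j}+1)) x)`. -/
def Vmulti (V : ℚ → ℚ) {t : ℕ} (r : Fin t → ℕ) (x : ℚ) : ℚ :=
  ∑ S : Finset (Fin t), (-1 : ℚ) ^ (t - S.card) * V ((∏ j ∈ S, ((2 : ℚ) ^ (r j) + 1)) * x)

/-!
Multiplying numerator and denominator of a rational number `x` with odd denominator turns the latter
into some `2 ^ k - 1`. If the fractional part of `x` is `a / (2 ^ k - 1)` with `a ≠ 0`, then that of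
`-x` is `(2 ^ k - 1 - a) / (2 ^ k - 1)`, whose numerator has the `k` binary digits of `a` flipped.
Hence `V x + V (-x)` is `1`, whereas it is `0` when `x` is an integer.

By coprimality, `(∏ j ∈ S, m j) * ∑ j, i j / m j` is an integer exactly when `m j ∣ i j` for every
`j ∉ S`. So, for `x = ∑ j, i j / m j`, the value `alternatingV V m x + alternatingV V m (-x)` is the
alternating sum over the sets `Sᶜ` that are not contained in `W = {j | m j ∣ i j}`. As the
alternating sum over all sets vanishes, what remains is minus the alternating sum over the subsets
of `W`, which is `-1` if `W` is empty and `0` otherwise.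
-/

open Finset

section Digits

variable {b : ℕ}

theorem sum_digits_eq_mod_add_sum_digits_div (hb : 1 < b) (n : ℕ) :
    (b.digits n).sum = n % b + (b.digits (n / b)).sum := by
  rcases eq_or_ne n 0 with rfl | hn
  · simp
  · rw [Nat.digits_eq_cons_digits_div hb hn, List.sum_cons]

theorem mod_add_mod_add_one_eq_of_dvd (hb : 0 < b) {m n : ℕ} (h : b ∣ m + n + 1) :
    m % b + n % b + 1 = b := by
  have hmod : m % b + n % b + 1 ≡ m + n + 1 [MOD b] :=
    ((Nat.mod_modEq m b).add (Nat.mod_modEq n b)).add_right 1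
  have := Nat.mod_lt m hb
  have := Nat.mod_lt n hb
  exact Nat.eq_of_dvd_of_lt_two_mul (Nat.succ_ne_zero _) ((hmod.dvd_iff dvd_rfl).2 h) (by omega)

theorem sum_digits_add_sum_digits_of_add_add_one_eq_pow (hb : 1 < b) {k m n : ℕ}
    (h : m + n + 1 = b ^ k) : (b.digits m).sum + (b.digits n).sum = k * (b - 1) := by
  induction k generalizing m n with
  | zero =>
    obtain ⟨rfl, rfl⟩ : m = 0 ∧ n = 0 := by rw [pow_zero] at h; omega
    simp
  | succ k ih =>
    have hmod : m % b + n % b + 1 = b :=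
      mod_add_mod_add_one_eq_of_dvd (by omega) (h ▸ dvd_pow_self b k.succ_ne_zero)
    have hdiv : m / b + n / b + 1 = b ^ k := by
      refine Nat.eq_of_mul_eq_mul_left (by omega : 0 < b) ?_
      linarith [Nat.mod_add_div m b, Nat.mod_add_div n b, pow_succ' b k]
    rw [sum_digits_eq_mod_add_sum_digits_div hb m, sum_digits_eq_mod_add_sum_digits_div hb n,
      add_mul, one_mul, ← ih hdiv]
    omega

theorem exists_fract_eq_div_pow_sub_one (hb : 1 < b) {x : ℚ} (hx : b.Coprime x.den) :
    ∃ k a : ℕ, 0 < k ∧ a < b ^ k - 1 ∧ Int.fract x = a / (b ^ k - 1) := by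
  obtain ⟨k, hk, hdvd⟩ : ∃ k, 0 < k ∧ x.den ∣ b ^ k - 1 :=
    ⟨x.den.totient, Nat.totient_pos.2 x.den_pos,
      (Nat.modEq_iff_dvd' (Nat.one_le_pow _ _ (by omega))).1 (Nat.ModEq.pow_totient hx).symm⟩
  obtain ⟨c, hc⟩ := hdvd
  have hpow : 1 < b ^ k := Nat.one_lt_pow hk.ne' hb
  have hc0 : (c : ℚ) ≠ 0 := Nat.cast_ne_zero.2 (by rintro rfl; omega)
  have hxc : x = ((x.num * c : ℤ) : ℚ) / (b ^ k - 1 : ℕ) := by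
    rw [hc]
    push_cast
    rw [mul_div_mul_right _ _ hc0, Rat.num_div_den]
  have hpos : (0 : ℤ) < (b ^ k - 1 : ℕ) := by omega
  obtain ⟨a, ha⟩ := Int.eq_ofNat_of_zero_le (Int.emod_nonneg (x.num * c) hpos.ne')
  refine ⟨k, a, hk, ?_, ?_⟩
  · exact_mod_cast ha ▸ Int.emod_lt_of_pos (x.num * c) hpos
  · rw [hxc, Int.fract_div_intCast_eq_div_intCast_mod, ha, Int.cast_natCast,
      Nat.cast_sub hpow.le, Nat.cast_pow, Nat.cast_one]

end Digits

namespace IsV2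

variable {V : ℚ → ℚ}

theorem apply_of_fract_eq (hV : IsV2 V) {x : ℚ} {k a : ℕ} (hk : 0 < k) (ha : a < 2 ^ k - 1)
    (hx : Int.fract x = a / (2 ^ k - 1)) : V x = ((Nat.digits 2 a).sum : ℚ) / k :=
  hV x k a hk ha ⟨⌊x⌋, by rw [← hx, Int.self_sub_fract]⟩

theorem apply_intCast (hV : IsV2 V) (z : ℤ) : V z = 0 := by
  simpa using hV.apply_of_fract_eq (x := z) (k := 2) (a := 0) two_pos (by norm_num) (by simp)

theorem apply_add_apply_neg_of_den_ne_one (hV : IsV2 V) {x : ℚ} (hodd : Odd x.den)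
    (hx : x.den ≠ 1) : V x + V (-x) = 1 := by
  obtain ⟨k, a, hk, ha, hfract⟩ :=
    exists_fract_eq_div_pow_sub_one one_lt_two (Nat.coprime_two_left.2 hodd)
  push_cast at hfract
  have hfract0 : Int.fract x ≠ 0 := fun h ↦ by
    obtain ⟨z, rfl⟩ := Int.fract_eq_zero_iff.1 h
    exact hx (Rat.den_intCast z)
  have ha0 : a ≠ 0 := by rintro rfl; simp [hfract] at hfract0
  obtain ⟨a', ha'⟩ : ∃ a', a + a' + 1 = 2 ^ k := ⟨2 ^ k - 1 - a, by omega⟩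
  have hfract' : Int.fract (-x) = a' / (2 ^ k - 1) := by
    have hpow : (a : ℚ) + a' = 2 ^ k - 1 := eq_sub_of_add_eq (by exact_mod_cast ha')
    have hne : (a : ℚ) + a' ≠ 0 := by positivity
    rw [Int.fract_neg hfract0, hfract, ← hpow, one_sub_div hne, add_sub_cancel_left]
  have hsum := sum_digits_add_sum_digits_of_add_add_one_eq_pow one_lt_two ha'
  rw [hV.apply_of_fract_eq hk ha hfract, hV.apply_of_fract_eq hk (by omega) hfract', ← add_div,
    div_eq_one_iff_eq (by positivity)]
  exact_mod_cast hsum.trans (mul_one k)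

theorem apply_div_add_apply_neg_div (hV : IsV2 V) {M : ℤ} (hM : Odd M) (z : ℤ) :
    V (z / M) + V (-(z / M)) = if M ∣ z then 0 else 1 := by
  have hM0 : M ≠ 0 := by rintro rfl; simp at hM
  split_ifs with hdvd
  · obtain ⟨w, rfl⟩ := hdvd
    have hw : ((M * w : ℤ) : ℚ) / M = w := by push_cast; field_simp
    rw [hw, ← Int.cast_neg, hV.apply_intCast, hV.apply_intCast, add_zero]
  · refine hV.apply_add_apply_neg_of_den_ne_one ?_
      (mt (Rat.den_div_intCast_eq_one_iff z M hM0).1 hdvd)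
    rw [← Rat.divInt_eq_div]
    exact (Int.natAbs_odd.2 hM).of_dvd_nat (Int.natCast_dvd.1 (Rat.den_dvd z M))

end IsV2

section CommonDenominator

variable {ι : Type*} [DecidableEq ι] {s T : Finset ι}

theorem sum_div_eq_sum_mul_prod_erase_div_prod {K : Type*} [Semifield K] (i : ι → K) {m : ι → K}
    (hm : ∀ j ∈ s, m j ≠ 0) :
    ∑ j ∈ s, i j / m j = (∑ j ∈ s, i j * ∏ l ∈ s.erase j, m l) / ∏ j ∈ s, m j := by
  rw [sum_div]
  refine sum_congr rfl fun j hj ↦ ?_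
  have herase : ∏ l ∈ s.erase j, m l ≠ 0 := prod_ne_zero_iff.2 fun l hl ↦ hm l (mem_of_mem_erase hl)
  rw [← mul_prod_erase s m hj, mul_div_mul_right _ _ herase]

variable {R : Type*} [CommRing R] {m : ι → R}

theorem dvd_sum_mul_prod_erase_iff (hm : (s : Set ι).Pairwise (Function.onFun IsCoprime m))
    (i : ι → R) {j : ι} (hj : j ∈ s) :
    m j ∣ ∑ l ∈ s, i l * ∏ k ∈ s.erase l, m k ↔ m j ∣ i j := by
  have hrest : m j ∣ ∑ l ∈ s.erase j, i l * ∏ k ∈ s.erase l, m k :=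
    dvd_sum fun l hl ↦ (dvd_prod_of_mem m
      (mem_erase.2 ⟨(ne_of_mem_erase hl).symm, hj⟩)).mul_left _
  have hcop : IsCoprime (m j) (∏ k ∈ s.erase j, m k) :=
    IsCoprime.prod_right fun k hk ↦ hm hj (mem_of_mem_erase hk) (ne_of_mem_erase hk).symm
  rw [← add_sum_erase s _ hj, dvd_add_left hrest]
  exact ⟨hcop.dvd_of_dvd_mul_right, (Dvd.dvd.mul_right · _)⟩

theorem prod_dvd_sum_mul_prod_erase_iff (hm : (s : Set ι).Pairwise (Function.onFun IsCoprime m))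
    (i : ι → R) (hT : T ⊆ s) :
    ∏ j ∈ T, m j ∣ ∑ l ∈ s, i l * ∏ k ∈ s.erase l, m k ↔ ∀ j ∈ T, m j ∣ i j := by
  have hfactor (j : ι) (hj : j ∈ T) := dvd_sum_mul_prod_erase_iff hm i (hT hj)
  constructor
  · intro h j hj
    exact (hfactor j hj).1 ((dvd_prod_of_mem m hj).trans h)
  · intro h
    exact prod_dvd_of_coprime (hm.mono (coe_subset.2 hT)) fun j hj ↦ (hfactor j hj).2 (h j hj)

end CommonDenominator

section AlternatingSum

variable {ι : Type*} [Fintype ι]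

theorem sum_neg_one_pow_card_mul_ite_forall_mem [DecidableEq ι] [Nonempty ι] {R : Type*} [Ring R]
    (p : ι → Prop) [DecidablePred p] :
    ∑ T : Finset ι, (-1 : R) ^ #T * (if ∀ j ∈ T, p j then 0 else 1) =
      if ∃ j, p j then 0 else -1 := by
  have hpowerset (U : Finset ι) :
      ∑ T ∈ U.powerset, (-1 : R) ^ #T = if U = ∅ then 1 else 0 := by
    exact_mod_cast congrArg (Int.cast : ℤ → R) (sum_powerset_neg_one_pow_card (x := U))
  have hsplit (T : Finset ι) : (-1 : R) ^ #T * (if ∀ j ∈ T, p j then 0 else 1) =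
      (-1) ^ #T - if T ∈ (univ.filter p).powerset then (-1) ^ #T else 0 := by
    simp only [mem_powerset, subset_iff, mem_filter_univ]
    split_ifs <;> simp
  simp only [hsplit]
  rw [sum_sub_distrib, sum_ite_mem, univ_inter, ← powerset_univ, hpowerset, hpowerset,
    if_neg univ_nonempty.ne_empty]
  by_cases hp : ∃ j, p j <;> simp [filter_eq_empty_iff, hp, ← not_exists]

/-- The alternating sum defining `Vmulti`, with arbitrary integers `m j` in place of the factors
`2 ^ r j + 1`. -/
def alternatingV (V : ℚ → ℚ) (m : ι → ℤ) (x : ℚ) : ℚ :=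
  ∑ S : Finset ι, (-1) ^ (Fintype.card ι - #S) * V ((∏ j ∈ S, (m j : ℚ)) * x)

theorem Vmulti_eq_alternatingV (V : ℚ → ℚ) {t : ℕ} (r : Fin t → ℕ) (x : ℚ) :
    Vmulti V r x = alternatingV V (fun j ↦ 2 ^ r j + 1) x := by
  simp [Vmulti, alternatingV]

theorem IsV2.apply_prod_mul_add_apply_prod_mul_neg [DecidableEq ι] {V : ℚ → ℚ} (hV : IsV2 V)
    {m : ι → ℤ} (hodd : ∀ j, Odd (m j)) (hcop : Pairwise (Function.onFun IsCoprime m)) (i : ι → ℤ)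
    (S : Finset ι) :
    V ((∏ j ∈ S, (m j : ℚ)) * ∑ j, (i j : ℚ) / m j) +
      V ((∏ j ∈ S, (m j : ℚ)) * -∑ j, (i j : ℚ) / m j) =
        if ∀ j ∈ Sᶜ, m j ∣ i j then 0 else 1 := by
  have hm (j : ι) : (m j : ℚ) ≠ 0 := Int.cast_ne_zero.2 fun h ↦ by simpa [h] using hodd j
  have hquot : (∏ j ∈ S, (m j : ℚ)) * ∑ j, (i j : ℚ) / m j =
      (∑ j, i j * ∏ l ∈ univ.erase j, m l : ℤ) / (∏ j ∈ Sᶜ, m j : ℤ) := by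
    have hS : ∏ j ∈ S, (m j : ℚ) ≠ 0 := prod_ne_zero_iff.2 fun j _ ↦ hm j
    rw [sum_div_eq_sum_mul_prod_erase_div_prod _ fun j _ ↦ hm j, ← prod_mul_prod_compl S,
      ← mul_div_assoc, mul_div_mul_left _ _ hS]
    push_cast
    rfl
  have hprod : Odd (∏ j ∈ Sᶜ, m j) :=
    prod_induction _ Odd (fun _ _ ↦ Odd.mul) odd_one fun j _ ↦ hodd j
  simp only [mul_neg, hquot, hV.apply_div_add_apply_neg_div hprod,
    prod_dvd_sum_mul_prod_erase_iff (hcop.set_pairwise _) i (subset_univ Sᶜ)]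

theorem stmt_8_general [Nonempty ι] {V : ℚ → ℚ} (hV : IsV2 V) {m : ι → ℤ}
    (hodd : ∀ j, Odd (m j)) (hcop : Pairwise (Function.onFun IsCoprime m)) (i : ι → ℤ) :
    alternatingV V m (∑ j, (i j : ℚ) / m j) + alternatingV V m (-∑ j, (i j : ℚ) / m j) =
      if ∃ j, m j ∣ i j then 0 else -1 := by
  classical
  simp only [alternatingV, ← sum_add_distrib, ← mul_add,
    hV.apply_prod_mul_add_apply_prod_mul_neg hodd hcop, ← card_compl]
  exact (compl_bijective.sum_comp
    fun T ↦ (-1 : ℚ) ^ #T * if ∀ j ∈ T, m j ∣ i j then 0 else 1).trans <|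
      sum_neg_one_pow_card_mul_ite_forall_mem fun j ↦ m j ∣ i j

end AlternatingSum

/-- For `t ≥ 1` and positive integers `a₁, …, a_t` with `2^{a_j}+1` pairwise coprime,
setting `x = ∑_j i_j/(2^{a_j}+1)`: if no `i_j` is divisible by `2^{a_j}+1` then
`V(2; a; x) + V(2; a; -x) = -1`; if some `i_j` is divisible by `2^{a_j}+1` then
`V(2; a; x) + V(2; a; -x) = 0`. -/
theorem stmt_8 (V : ℚ → ℚ) (hV : IsV2 V) (t : ℕ) (ht : 1 ≤ t)
    (a : Fin t → ℕ) (hpos : ∀ j, 0 < a j)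
    (hcop : ∀ j k, j ≠ k → Nat.Coprime (2 ^ a j + 1) (2 ^ a k + 1))
    (i : Fin t → ℤ) (x : ℚ) (hxdef : x = ∑ j, (i j : ℚ) / ((2 : ℚ) ^ a j + 1)) :
    ((∀ j, ¬ ((2 ^ a j + 1 : ℤ) ∣ i j)) →
        Vmulti V a x + Vmulti V a (-x) = -1) ∧
      ((∃ j, (2 ^ a j + 1 : ℤ) ∣ i j) →
        Vmulti V a x + Vmulti V a (-x) = 0) := by
  have : Nonempty (Fin t) := ⟨⟨0, ht⟩⟩
  have hodd (j : Fin t) : Odd (2 ^ a j + 1 : ℤ) := (even_two.pow_of_ne_zero (hpos j).ne').add_one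
  have hcop' : Pairwise (Function.onFun IsCoprime fun j ↦ (2 ^ a j + 1 : ℤ)) :=
    fun j k hjk ↦ by simpa using (hcop j k hjk).isCoprime
  have hsum := stmt_8_general hV hodd hcop' i
  push_cast at hsum
  rw [Vmulti_eq_alternatingV, Vmulti_eq_alternatingV, hxdef, hsum]
  exact ⟨fun h ↦ if_neg (not_exists.2 h), fun h ↦ if_pos h⟩
end
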